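/- Fix k ≥ 2 and n ∈ ℕ, and let g ∈ G_n be a minimal representative. The multiplication map (h₁,h₂) ↦ h₁·h₂ is a bijection from the set of pairs (h₁,h₂), where h₁ is a block-preserving permutation with support contained in [g]_H lying in g·H_{[g]_H}·g⁻¹ (H_{[g]_H} being the group of block-preserving permutations with support contained in [g]_H), and h₂ is a block-preserving permutation with support contained in {0,…,kn−1} ∖ [g]_H, onto the intersection H_n ∩ g·H_n·g⁻¹. In particular H_n ∩ gH_ng⁻¹ = (H_{[g]_H} ∩ gH_{[g]_H}g⁻¹) ⊕ H_{{0,…,kn−1}∖[g]_H} as an internal direct product. -/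

import Mathlib

/-!
Write `S` for the `H`-support of `g`. If `r ∉ S`, then `g` maps the block of `r` onto a block, so
minimality forces `g` to fix that block pointwise; thus `g` is the identity off `S`
(`MinimalRep.apply_eq_of_notMem`), and it commutes with every permutation supported off `S`.
Hence products `h₁ * h₂` of the stated kind lie in `H_n ∩ g H_n g⁻¹`, and `h₁`, `h₂` are recovered
from the product by restricting it to `S` and to the complement of `S`.

For surjectivity, let `h = g h' g⁻¹` with `h`, `h'` block-preserving, and let `Γ` be a block outside
`S`. Then `h(Γ) = g(h'(Γ))`, where `h(Γ)` and `h'(Γ)` are blocks, so the block `h'(Γ)` is mapped by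
`g` onto a block and again lies outside `S`; moreover `h` and `h'` agree on `Γ`
(`MinimalRep.conj_apply_of_notMem`). Applying this to the inverses as well shows that `h` and `h'`
preserve `S`. Their restrictions to `S`, extended by the identity, give `h₁` and the element
conjugate to it, and the restriction of `h` to the complement of `S` gives `h₂`.
-/

/-- A permutation of `ℕ` is block-preserving (for block size `k`) if elements lying in a
common block `Γ_i = {k*i, …, k*i+k-1}` are mapped to elements lying in a common block:
`⌊r/k⌋ = ⌊s/k⌋` implies `⌊h r/k⌋ = ⌊h s/k⌋`. -/
def BlockPreserving (k : ℕ) (h : Equiv.Perm ℕ) : Prop :=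
  ∀ r s : ℕ, r / k = s / k → h r / k = h s / k

/-- Membership in `G_n`: permutations of `ℕ` fixing every `r ≥ k*n`. -/
def InG (k n : ℕ) (g : Equiv.Perm ℕ) : Prop :=
  ∀ r : ℕ, k * n ≤ r → g r = r

/-- Membership in `H_n = S_k ≀ S_n`: block-preserving elements of `G_n`. -/
def InH (k n : ℕ) (h : Equiv.Perm ℕ) : Prop :=
  InG k n h ∧ BlockPreserving k h

/-- The `i`-th block `Γ_i = {k*i, …, k*i+k-1}`. -/
def Block (k i : ℕ) : Set ℕ := {r | r / k = i}

/-- `g` is a minimal representative: (a) whenever `g` maps a block `Γ_i` onto a block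
`Γ_j` then `i = j`; (b) whenever `p (g s) = p s` then `g s = s`. -/
def MinimalRep (k : ℕ) (g : Equiv.Perm ℕ) : Prop :=
  (∀ i j : ℕ, ⇑g '' Block k i = Block k j → i = j) ∧
  (∀ s : ℕ, g s / k = s / k → g s = s)

/-- The `H`-support `[g]_H` of `g`: the union of those blocks `Γ_i` whose image
`g(Γ_i)` is not equal to any block `Γ_j`. -/
def HSupport (k : ℕ) (g : Equiv.Perm ℕ) : Set ℕ :=
  {r | ∀ j : ℕ, ⇑g '' Block k (r / k) ≠ Block k j}

theorem block_eq_Ico {k : ℕ} (hk : 0 < k) (i : ℕ) :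
    Block k i = (Finset.Ico (i * k) ((i + 1) * k) : Finset ℕ) := by
  ext r
  rw [Finset.mem_coe, Finset.mem_Ico, ← Nat.le_div_iff_mul_le hk, ← Nat.div_lt_iff_lt_mul hk]
  change r / k = i ↔ _
  omega

/-- Blocks are finite and of equal size, so the image of a block, being contained in a block,
is all of it. -/
theorem BlockPreserving.image_block {k : ℕ} (hk : 0 < k) {h : Equiv.Perm ℕ}
    (hh : BlockPreserving k h) (r : ℕ) : ⇑h '' Block k (r / k) = Block k (h r / k) := by
  have hcard : ∀ i, (Block k i).ncard = k := fun i => by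
    rw [block_eq_Ico hk, Set.ncard_coe_finset, Nat.card_Ico, Nat.add_mul, one_mul]
    omega
  refine Set.eq_of_subset_of_ncard_le ?_ ?_ ?_
  · rintro _ ⟨s, hs, rfl⟩
    exact hh s r hs
  · rw [Set.ncard_image_of_injective _ h.injective, hcard, hcard]
  · rw [block_eq_Ico hk]
    exact Finset.finite_toSet _

theorem BlockPreserving.inv {k : ℕ} (hk : 0 < k) {h : Equiv.Perm ℕ}
    (hh : BlockPreserving k h) : BlockPreserving k h⁻¹ := by
  intro r s hrs
  have him := hh.image_block hk (h⁻¹ r)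
  simp only [← Equiv.Perm.mul_apply, mul_inv_cancel, Equiv.Perm.one_apply] at him
  have hs : s ∈ Block k (r / k) := hrs.symm
  rw [← him] at hs
  obtain ⟨t, ht, rfl⟩ := hs
  rw [← Equiv.Perm.mul_apply, inv_mul_cancel, Equiv.Perm.one_apply]
  exact Eq.symm ht

theorem BlockPreserving.mul {k : ℕ} {h₁ h₂ : Equiv.Perm ℕ}
    (hh₁ : BlockPreserving k h₁) (hh₂ : BlockPreserving k h₂) : BlockPreserving k (h₁ * h₂) :=
  fun r s hrs => hh₁ _ _ (hh₂ r s hrs)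

theorem mem_HSupport_congr {k : ℕ} {g : Equiv.Perm ℕ} {r s : ℕ} (hrs : r / k = s / k) :
    r ∈ HSupport k g ↔ s ∈ HSupport k g := by
  simp only [HSupport, Set.mem_ofPred_eq, hrs]

theorem notMem_HSupport {k : ℕ} {g : Equiv.Perm ℕ} {r : ℕ} :
    r ∉ HSupport k g ↔ ∃ j, ⇑g '' Block k (r / k) = Block k j := by
  simp [HSupport]

theorem lt_of_mem_HSupport {k n : ℕ} (hk : 0 < k) {g : Equiv.Perm ℕ} (hg : InG k n g) {r : ℕ}
    (hr : r ∈ HSupport k g) : r < k * n := by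
  by_contra! hle
  refine notMem_HSupport.2 ⟨r / k, ?_⟩ hr
  have hfix : ∀ s ∈ Block k (r / k), g s = s := fun s hs => by
    apply hg
    have hs' : s / k = r / k := hs
    have hn : n ≤ s / k := hs' ▸ (Nat.le_div_iff_mul_le hk).2 (by rwa [mul_comm])
    rw [mul_comm]
    exact (Nat.le_div_iff_mul_le hk).1 hn
  rw [Set.image_congr hfix, Set.image_id']

/-- A minimal representative is supported in its `H`-support. -/
theorem MinimalRep.apply_eq_of_notMem {k : ℕ} {g : Equiv.Perm ℕ} (hmin : MinimalRep k g) {r : ℕ}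
    (hr : r ∉ HSupport k g) : g r = r := by
  obtain ⟨j, hj⟩ := notMem_HSupport.1 hr
  have hij := hmin.1 _ _ hj
  have hgr : g r ∈ Block k j := hj ▸ Set.mem_image_of_mem g (show r ∈ Block k (r / k) from rfl)
  exact hmin.2 r (Eq.trans hgr hij.symm)

theorem MinimalRep.apply_mem_iff {k : ℕ} {g : Equiv.Perm ℕ} (hmin : MinimalRep k g) (r : ℕ) :
    g r ∈ HSupport k g ↔ r ∈ HSupport k g := by
  rw [← not_iff_not]
  constructor
  · intro h
    have heq : g r = r := g.injective (hmin.apply_eq_of_notMem h)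
    rwa [heq] at h
  · intro h
    rwa [hmin.apply_eq_of_notMem h]

/-- If `h` and `h'` are block-preserving and conjugate under `g`, then off the `H`-support of `g`
they agree, and they do not enter that support. -/
theorem MinimalRep.conj_apply_of_notMem {k : ℕ} (hk : 0 < k) {g h h' : Equiv.Perm ℕ}
    (hmin : MinimalRep k g) (hh : BlockPreserving k h) (hh' : BlockPreserving k h')
    (hconj : ∀ r, h (g r) = g (h' r)) {r : ℕ} (hr : r ∉ HSupport k g) :
    h' r ∉ HSupport k g ∧ h r = h' r := by
  have hfix : ∀ s ∈ Block k (r / k), g (h' s) = h s := fun s hs => by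
    rw [← hconj, hmin.apply_eq_of_notMem fun hs' => hr ((mem_HSupport_congr hs).1 hs')]
  have hmem : h' r ∉ HSupport k g := by
    refine notMem_HSupport.2 ⟨h r / k, ?_⟩
    rw [← hh'.image_block hk, Set.image_image, Set.image_congr hfix, hh.image_block hk]
  exact ⟨hmem, by rw [← hfix r rfl, hmin.apply_eq_of_notMem hmem]⟩

/-- The two directions come from `MinimalRep.conj_apply_of_notMem` for `h, h'` and for
`h⁻¹, h'⁻¹`. -/
theorem MinimalRep.conj_mem_iff {k : ℕ} (hk : 0 < k) {g h h' : Equiv.Perm ℕ}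
    (hmin : MinimalRep k g) (hh : BlockPreserving k h) (hh' : BlockPreserving k h')
    (hconj : ∀ r, h (g r) = g (h' r)) (r : ℕ) :
    (h r ∈ HSupport k g ↔ r ∈ HSupport k g) ∧ (h' r ∈ HSupport k g ↔ r ∈ HSupport k g) := by
  have hinv : ∀ r, h⁻¹ (g r) = g (h'⁻¹ r) := fun r => by
    rw [Equiv.Perm.inv_eq_iff_eq, hconj, ← Equiv.Perm.mul_apply h', mul_inv_cancel,
      Equiv.Perm.one_apply]
  have hout := fun {s : ℕ} (hs : s ∉ HSupport k g) =>
    hmin.conj_apply_of_notMem hk hh hh' hconj hs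
  have hin := fun {s : ℕ} (hs : s ∉ HSupport k g) =>
    hmin.conj_apply_of_notMem hk (hh.inv hk) (hh'.inv hk) hinv hs
  refine ⟨not_iff_not.1 ⟨fun hs => ?_, fun hs => ?_⟩, not_iff_not.1 ⟨fun hs => ?_, fun hs => ?_⟩⟩
  · have h1 := hin hs
    rw [← h1.2, ← Equiv.Perm.mul_apply, inv_mul_cancel, Equiv.Perm.one_apply] at h1
    exact h1.1
  · rw [(hout hs).2]
    exact (hout hs).1
  · have h1 := (hin hs).1
    rwa [← Equiv.Perm.mul_apply, inv_mul_cancel, Equiv.Perm.one_apply] at h1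
  · exact (hout hs).1

/-- A permutation preserving `S` can be restricted to `S` and extended by the identity. -/
theorem exists_perm_restrict (h : Equiv.Perm ℕ) (S : Set ℕ) (hS : ∀ r, h r ∈ S ↔ r ∈ S) :
    ∃ f : Equiv.Perm ℕ, (∀ r ∈ S, f r = h r) ∧ ∀ r ∉ S, f r = r := by
  classical
  refine ⟨Equiv.Perm.ofSubtype (h.subtypePerm (p := (· ∈ S)) hS), fun r hr => ?_, fun r hr => ?_⟩
  · rw [Equiv.Perm.ofSubtype_apply_of_mem _ hr]
    rfl
  · exact Equiv.Perm.ofSubtype_apply_of_not_mem _ hr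

/-- Restricting a block-preserving permutation to a union `S` of blocks keeps it
block-preserving. -/
theorem BlockPreserving.restrict {k : ℕ} {h f : Equiv.Perm ℕ} (hh : BlockPreserving k h)
    {S : Set ℕ} (hS : ∀ r s, r / k = s / k → (r ∈ S ↔ s ∈ S))
    (hf : ∀ r ∈ S, f r = h r) (hf' : ∀ r ∉ S, f r = r) : BlockPreserving k f := by
  intro r s hrs
  by_cases hr : r ∈ S
  · rw [hf r hr, hf s ((hS r s hrs).1 hr)]
    exact hh r s hrs
  · rw [hf' r hr, hf' s fun hs => hr ((hS r s hrs).2 hs)]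
    exact hrs

/-- Fix `k ≥ 2`, `n ∈ ℕ` and let `g ∈ G_n` be a minimal
representative. Multiplication `(h₁, h₂) ↦ h₁ * h₂` is a bijection from the set of
pairs where `h₁ ∈ H_{[g]_H} ∩ g·H_{[g]_H}·g⁻¹` (block-preserving, support in `[g]_H`,
and a `g`-conjugate of such an element) and `h₂ ∈ H_{{0,…,kn−1} ∖ [g]_H}`
(block-preserving with support in `{0,…,kn−1} ∖ [g]_H`), onto `H_n ∩ g·H_n·g⁻¹`. -/
theorem intersection_direct_sum_decomposition (k n : ℕ) (hk : 2 ≤ k)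
    (g : Equiv.Perm ℕ) (hg : InG k n g) (hmin : MinimalRep k g) :
    Set.BijOn (fun p : Equiv.Perm ℕ × Equiv.Perm ℕ => p.1 * p.2)
      {p : Equiv.Perm ℕ × Equiv.Perm ℕ |
        (BlockPreserving k p.1 ∧ (∀ r : ℕ, p.1 r ≠ r → r ∈ HSupport k g) ∧
          ∃ h' : Equiv.Perm ℕ, BlockPreserving k h' ∧
            (∀ r : ℕ, h' r ≠ r → r ∈ HSupport k g) ∧ p.1 = g * h' * g⁻¹) ∧
        (BlockPreserving k p.2 ∧
          ∀ r : ℕ, p.2 r ≠ r → r < k * n ∧ r ∉ HSupport k g)}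
      {h : Equiv.Perm ℕ | InH k n h ∧
        ∃ h' : Equiv.Perm ℕ, InH k n h' ∧ h = g * h' * g⁻¹} := by
  have hk0 : 0 < k := by omega
  refine ⟨?_, ?_, ?_⟩
  · rintro ⟨h₁, h₂⟩ ⟨⟨hb₁, hs₁, h', hb', hs', hconj⟩, hb₂, hs₂⟩
    dsimp only at hb₁ hs₁ hconj hb₂ hs₂ ⊢
    have hG : ∀ f : Equiv.Perm ℕ, (∀ r, f r ≠ r → r ∈ HSupport k g) → InG k n f :=
      fun f hf r hr => by
        by_contra hne
        exact absurd (lt_of_mem_HSupport hk0 hg (hf r hne)) (by omega)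
    have hG₂ : InG k n h₂ := fun r hr => by
      by_contra hne
      exact absurd (hs₂ r hne).1 (by omega)
    -- Disjoint supports make `h₂` commute with `g`, so `h₁ * h₂ = g * (h' * h₂) * g⁻¹`.
    have hdisj : Equiv.Perm.Disjoint g h₂ := fun r => by
      by_cases hr : r ∈ HSupport k g
      · exact Or.inr (by_contra fun hne => (hs₂ r hne).2 hr)
      · exact Or.inl (hmin.apply_eq_of_notMem hr)
    have hmulG : ∀ f : Equiv.Perm ℕ, InG k n f → InG k n (f * h₂) := fun f hf r hr => by
      rw [Equiv.Perm.mul_apply, hG₂ r hr, hf r hr]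
    refine ⟨⟨hmulG _ (hG _ hs₁), hb₁.mul hb₂⟩, h' * h₂, ⟨hmulG _ (hG _ hs'), hb'.mul hb₂⟩, ?_⟩
    rw [hconj, mul_assoc, mul_assoc, mul_assoc, mul_assoc, hdisj.commute.inv_left.eq]
  · rintro ⟨h₁, h₂⟩ ⟨⟨-, hs₁, -⟩, -, hs₂⟩ ⟨f₁, f₂⟩ ⟨⟨-, ht₁, -⟩, -, ht₂⟩ heq
    dsimp only at hs₁ hs₂ ht₁ ht₂ heq
    have h1 : h₁ = f₁ := by
      ext r
      by_cases hr : r ∈ HSupport k g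
      · have e1 : h₂ r = r := by_contra fun hne => (hs₂ r hne).2 hr
        have e2 : f₂ r = r := by_contra fun hne => (ht₂ r hne).2 hr
        have e := congrArg (fun f : Equiv.Perm ℕ => f r) heq
        simpa only [Equiv.Perm.mul_apply, e1, e2] using e
      · rw [not_imp_comm.1 (hs₁ r) hr, not_imp_comm.1 (ht₁ r) hr]
    subst h1
    rw [mul_left_cancel heq]
  · rintro h ⟨⟨hhG, hb⟩, h', ⟨-, hb'⟩, hconj⟩
    have hconj' : ∀ r, h (g r) = g (h' r) := fun r => by
      simp [hconj]
    have hmem := hmin.conj_mem_iff hk0 hb hb' hconj'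
    obtain ⟨h₁, hin₁, hout₁⟩ := exists_perm_restrict h (HSupport k g) fun r => (hmem r).1
    obtain ⟨f, hinf, houtf⟩ := exists_perm_restrict h' (HSupport k g) fun r => (hmem r).2
    obtain ⟨h₂, hin₂, hout₂⟩ := exists_perm_restrict h (HSupport k g)ᶜ
      fun r => not_congr (hmem r).1
    have hS : ∀ r s, r / k = s / k → (r ∈ HSupport k g ↔ s ∈ HSupport k g) :=
      fun r s => mem_HSupport_congr
    refine ⟨(h₁, h₂), ⟨⟨hb.restrict hS hin₁ hout₁, fun r => not_imp_comm.1 (hout₁ r), f,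
      hb'.restrict hS hinf houtf, fun r => not_imp_comm.1 (houtf r), ?_⟩,
      hb.restrict (fun r s hrs => not_congr (hS r s hrs)) hin₂ hout₂, fun r hr => ?_⟩, ?_⟩
    · rw [eq_mul_inv_iff_mul_eq]
      ext r
      rw [Equiv.Perm.mul_apply, Equiv.Perm.mul_apply]
      by_cases hr : r ∈ HSupport k g
      · rw [hin₁ _ ((hmin.apply_mem_iff r).2 hr), hinf r hr, hconj']
      · rw [houtf r hr, hmin.apply_eq_of_notMem hr, hout₁ r hr]
    · have hrS : r ∈ (HSupport k g)ᶜ := not_imp_comm.1 (hout₂ r) hr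
      refine ⟨?_, hrS⟩
      by_contra! hle
      exact hr (by rw [hin₂ r hrS, hhG r hle])
    · ext r
      change h₁ (h₂ r) = h r
      by_cases hr : r ∈ HSupport k g
      · rw [hout₂ r (not_not.2 hr), hin₁ r hr]
      · rw [hin₂ r hr, hout₁ _ fun hs => hr ((hmem r).1.1 hs)]
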